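/- Let 𝒳 be a finite-dimensional real inner product space, β ≥ 0, A, B : 𝒳 ⇉ 𝒳 maximal β-strongly monotone, γ > 0, θ > 0, and let {(u_k, v_k, x_k)} be generated by the relaxed PR splitting method from x₀ ∈ 𝒳. Set θ₀ := 1 + γβ/2, θ̃ := min{θ, θ₀}, x̃_k := x_{k−1} + θ̃(v_k − u_k), z_k := (u_k, v_k, x_k), z̃_k := (u_k, v_k, x̃_k), a_k := (x_{k−1} − u_k)/γ, b_k := (2u_k − v_k − x_{k−1})/γ, and let w(u,v,x) := ‖x‖²/(2θ) on 𝒵 := 𝒳³ with Bregman distance (dw)_z(z′) := w(z′) − w(z) − ⟨∇w(z), z′−z⟩ and r_k := ∇(dw)_{z_k}(z_{k−1}) = ∇w(z_{k−1}) − ∇w(z_k). Then for every k ≥ 1: (a) r_k = (0, 0, (x_{k−1} − x_k)/θ) = (0, 0, u_k − v_k) = γ(0, 0, a_k + b_k); (b) r_k ∈ (ℒ_{θ̃} + γC)(z̃_k); and (c) (dw)_{z_k}(z̃_k) = (θ/θ̃ − 1)² (dw)_{z_{k−1}}(z̃_k), i.e., the HPE error criterion (dw)_{z_k}(z̃_k)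 + λ_k ε_k ≤ σ (dw)_{z_{k−1}}(z̃_k) holds with λ_k = 1, ε_k = 0 and σ = (θ/θ̃ − 1)². -/

import Mathlib

open RealInnerProductSpace Filter Pointwise

/-- The inner product on the triple product space `𝒵 = 𝒳 × 𝒳 × 𝒳`. -/
noncomputable def inner3 {X : Type*} [NormedAddCommGroup X] [InnerProductSpace ℝ X]
    (z z' : X × X × X) : ℝ :=
  ⟪z.1, z'.1⟫ + ⟪z.2.1, z'.2.1⟫ + ⟪z.2.2, z'.2.2⟫

/-- The linear map `ℒ_θ̃(u,v,x) := ((1−θ̃)u + θ̃v − x, (θ̃−2)u + (1−θ̃)v + x, u − v)`. -/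
def Lmap {X : Type*} [NormedAddCommGroup X] [InnerProductSpace ℝ X]
    (θ : ℝ) (z : X × X × X) : X × X × X :=
  ((1 - θ) • z.1 + θ • z.2.1 - z.2.2,
    (θ - 2) • z.1 + (1 - θ) • z.2.1 + z.2.2,
    z.1 - z.2.1)

/-- The operator `(ℒ_θ̃ + γC)(u,v,x)` where `C(u,v,x) := A(u) × B(v) × {0}`. -/
def LC {X : Type*} [NormedAddCommGroup X] [InnerProductSpace ℝ X]
    (θ γ : ℝ) (A B : X → Set X) (z : X × X × X) : Set (X × X × X) :=
  {rr | ∃ a ∈ A z.1, ∃ b ∈ B z.2.1, rr = Lmap θ z + γ • ((a, b, (0 : X)) : X × X × X)}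

/-- `T : 𝒳 ⇉ 𝒳` is β-strongly monotone (β = 0 meaning just monotone). -/
def StrMono {X : Type*} [NormedAddCommGroup X] [InnerProductSpace ℝ X]
    (β : ℝ) (T : X → Set X) : Prop :=
  ∀ x x' w w' : X, w ∈ T x → w' ∈ T x' → β * ‖x - x'‖ ^ 2 ≤ ⟪w - w', x - x'⟫

/-- `T : 𝒳 ⇉ 𝒳` is maximal β-strongly monotone: it is β-strongly monotone and its graph
is not properly contained in the graph of another monotone operator. -/
def MaxStrMono {X : Type*} [NormedAddCommGroup X] [InnerProductSpace ℝ X]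
    (β : ℝ) (T : X → Set X) : Prop :=
  StrMono β T ∧ ∀ T' : X → Set X, StrMono 0 T' → (∀ x, T x ⊆ T' x) → T' = T

/-- Monotonicity of an operator on the triple product space `𝒵 = 𝒳³`. -/
def Mono3 {X : Type*} [NormedAddCommGroup X] [InnerProductSpace ℝ X]
    (T : (X × X × X) → Set (X × X × X)) : Prop :=
  ∀ z z' t t', t ∈ T z → t' ∈ T z' → 0 ≤ inner3 (z - z') (t - t')

/-- Maximal monotonicity of an operator on the triple product space `𝒵 = 𝒳³`. -/
def MaxMono3 {X : Type*} [NormedAddCommGroup X] [InnerProductSpace ℝ X]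
    (T : (X × X × X) → Set (X × X × X)) : Prop :=
  Mono3 T ∧ ∀ T', Mono3 T' → (∀ z, T z ⊆ T' z) → T' = T

/-- The ε-enlargement `T^[ε]` of an operator on `𝒳`. -/
def epsEnlX {X : Type*} [NormedAddCommGroup X] [InnerProductSpace ℝ X]
    (T : X → Set X) (ε : ℝ) (z : X) : Set X :=
  {t | ∀ z' t' : X, t' ∈ T z' → -ε ≤ ⟪t - t', z - z'⟫}

/-- The relaxed Peaceman–Rachford splitting method with relaxation parameter `θ` and
scaling `γ`: for `k ≥ 1`, `u_k = J_{γA}(x_{k−1})`, `v_k = J_{γB}(2u_k − x_{k−1})`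
(expressed through resolvent inclusions) and `x_k = x_{k−1} + θ(v_k − u_k)`. -/
structure RPR {X : Type*} [NormedAddCommGroup X] [InnerProductSpace ℝ X]
    (A B : X → Set X) (γ θ : ℝ) (x u v : ℕ → X) : Prop where
  resA : ∀ k, 1 ≤ k → x (k - 1) - u k ∈ γ • A (u k)
  resB : ∀ k, 1 ≤ k → (2 : ℝ) • u k - x (k - 1) - v k ∈ γ • B (v k)
  step : ∀ k, 1 ≤ k → x k = x (k - 1) + θ • (v k - u k)

/-- The distance generating function `w(u,v,x) := ‖x‖²/(2θ)` on `𝒵 = 𝒳³`. -/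
noncomputable def w3 {X : Type*} [NormedAddCommGroup X] [InnerProductSpace ℝ X]
    (θ : ℝ) (z : X × X × X) : ℝ := ‖z.2.2‖ ^ 2 / (2 * θ)

/-- The gradient of `w3 θ`: `∇w(u,v,x) = (0, 0, x/θ)`. -/
noncomputable def gradw3 {X : Type*} [NormedAddCommGroup X] [InnerProductSpace ℝ X]
    (θ : ℝ) (z : X × X × X) : X × X × X := ((0 : X), (0 : X), θ⁻¹ • z.2.2)

/-- The Bregman distance of `w3 θ`: `(dw)_z(z') := w(z') − w(z) − ⟨∇w(z), z'−z⟩`. -/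
noncomputable def dw3 {X : Type*} [NormedAddCommGroup X] [InnerProductSpace ℝ X]
    (θ : ℝ) (z z' : X × X × X) : ℝ :=
  w3 θ z' - w3 θ z - inner3 (gradw3 θ z) (z' - z)

/-!
The points `x_{k-1}`, `x̃_k`, `x_k` lie on one line with direction `v_k - u_k`, at parameters
`0`, `θ̃`, `θ`, and the Bregman distance of `w` only sees the third component, as
`‖·‖² / (2θ)`. The criterion is thus an equality, with constant
`((θ̃ - θ) / θ̃)² = (θ / θ̃ - 1)²`. Substituting `x̃_k` in `ℒ_θ̃` cancels every occurrence of `θ̃`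
and leaves `(u_k - x_{k-1}, v_k + x_{k-1} - 2u_k, u_k - v_k)`, whose first two components are the
negatives of the two resolvent residuals.
-/

section

variable {X : Type*} [NormedAddCommGroup X] [InnerProductSpace ℝ X]

theorem gradw3_sub_gradw3 (θ : ℝ) (z z' : X × X × X) :
    gradw3 θ z - gradw3 θ z' = (0, 0, θ⁻¹ • (z.2.2 - z'.2.2)) := by
  simp only [gradw3, Prod.mk_sub_mk, sub_self, smul_sub]

theorem dw3_eq_norm_sub_sq_div (θ : ℝ) (z z' : X × X × X) :
    dw3 θ z z' = ‖z'.2.2 - z.2.2‖ ^ 2 / (2 * θ) := by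
  simp only [dw3, w3, inner3, gradw3, inner_zero_left, Prod.snd_sub, real_inner_smul_left,
    inner_sub_right, real_inner_self_eq_norm_sq, norm_sub_sq_real,
    real_inner_comm z.2.2 z'.2.2]
  ring

theorem dw3_eq_div_sub_one_sq_mul_dw3 (θ : ℝ) {s t : ℝ} (ht : t ≠ 0) {z z' p : X × X × X} {d : X}
    (hz' : z'.2.2 = z.2.2 + s • d) (hp : p.2.2 = z.2.2 + t • d) :
    dw3 θ z' p = (s / t - 1) ^ 2 * dw3 θ z p := by
  have hpz' : p.2.2 - z'.2.2 = (t - s) • d := by rw [hp, hz']; module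
  have hpz : p.2.2 - z.2.2 = t • d := by rw [hp, add_sub_cancel_left]
  rw [dw3_eq_norm_sub_sq_div, dw3_eq_norm_sub_sq_div, hpz', hpz]
  simp only [norm_smul, mul_pow, Real.norm_eq_abs, sq_abs]
  field_simp
  ring

theorem Lmap_add_smul_sub (t : ℝ) (u v x : X) :
    Lmap t (u, v, x + t • (v - u)) = (u - x, v + x - (2 : ℝ) • u, u - v) := by
  simp only [Lmap, Prod.mk.injEq, and_true]
  constructor <;> module

theorem mem_LC_of_resolvent (t : ℝ) {γ : ℝ} {A B : X → Set X} {u v x : X}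
    (hu : x - u ∈ γ • A u) (hv : (2 : ℝ) • u - x - v ∈ γ • B v) :
    (0, 0, u - v) ∈ LC t γ A B (u, v, x + t • (v - u)) := by
  obtain ⟨a, ha, hγa⟩ := Set.mem_smul_set.mp hu
  obtain ⟨b, hb, hγb⟩ := Set.mem_smul_set.mp hv
  refine ⟨a, ha, b, hb, ?_⟩
  simp only [Lmap_add_smul_sub, Prod.smul_mk, Prod.mk_add_mk, hγa, hγb, smul_zero, add_zero,
    Prod.mk.injEq, and_true]
  constructor <;> module

theorem smul_inv_smul_residuals_add {γ : ℝ} (hγ : γ ≠ 0) (u v x : X) :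
    γ • (γ⁻¹ • (x - u) + γ⁻¹ • ((2 : ℝ) • u - v - x)) = u - v := by
  rw [← smul_add, smul_inv_smul₀ hγ]
  module

theorem RPR.inv_smul_sub_eq {A B : X → Set X} {γ θ : ℝ} {x u v : ℕ → X}
    (hpr : RPR A B γ θ x u v) (hθ : θ ≠ 0) {k : ℕ} (hk : 1 ≤ k) :
    θ⁻¹ • (x (k - 1) - x k) = u k - v k := by
  rw [hpr.step k hk, sub_add_cancel_left, smul_neg, inv_smul_smul₀ hθ, neg_sub]

theorem stmt14_general {A B : X → Set X} {γ θ θt : ℝ} (hγ : γ ≠ 0) (hθ : θ ≠ 0) (hθt : θt ≠ 0)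
    {x u v : ℕ → X} (hpr : RPR A B γ θ x u v) {a b : ℕ → X}
    (ha : ∀ k, a k = γ⁻¹ • (x (k - 1) - u k))
    (hb : ∀ k, b k = γ⁻¹ • ((2 : ℝ) • u k - v k - x (k - 1)))
    {xt : ℕ → X} (hxt : ∀ k, xt k = x (k - 1) + θt • (v k - u k))
    {r : ℕ → X × X × X}
    (hr : ∀ k, r k = gradw3 θ (u (k - 1), v (k - 1), x (k - 1)) - gradw3 θ (u k, v k, x k)) :
    ∀ k, 1 ≤ k →
      (r k = (((0 : X), (0 : X), θ⁻¹ • (x (k - 1) - x k)) : X × X × X)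
        ∧ r k = (((0 : X), (0 : X), u k - v k) : X × X × X)
        ∧ r k = γ • (((0 : X), (0 : X), a k + b k) : X × X × X))
      ∧ r k ∈ LC θt γ A B (u k, v k, xt k)
      ∧ (dw3 θ (u k, v k, x k) (u k, v k, xt k)
            = (θ / θt - 1) ^ 2 * dw3 θ (u (k - 1), v (k - 1), x (k - 1)) (u k, v k, xt k)
        ∧ dw3 θ (u k, v k, x k) (u k, v k, xt k) + 1 * 0
            ≤ (θ / θt - 1) ^ 2 * dw3 θ (u (k - 1), v (k - 1), x (k - 1)) (u k, v k, xt k)) := by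
  intro k hk
  have r_eq_step : r k = (0, 0, θ⁻¹ • (x (k - 1) - x k)) := by rw [hr, gradw3_sub_gradw3]
  have r_eq_gap : r k = (0, 0, u k - v k) := by rw [r_eq_step, hpr.inv_smul_sub_eq hθ hk]
  have r_eq_residuals : r k = γ • (0, 0, a k + b k) := by
    simp only [r_eq_gap, ha, hb, Prod.smul_mk, smul_zero, smul_inv_smul_residuals_add hγ]
  have r_mem : r k ∈ LC θt γ A B (u k, v k, xt k) := by
    rw [r_eq_gap, hxt]
    exact mem_LC_of_resolvent θt (hpr.resA k hk) (hpr.resB k hk)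
  have dw_eq : dw3 θ (u k, v k, x k) (u k, v k, xt k)
      = (θ / θt - 1) ^ 2 * dw3 θ (u (k - 1), v (k - 1), x (k - 1)) (u k, v k, xt k) :=
    dw3_eq_div_sub_one_sq_mul_dw3 θ hθt (hpr.step k hk) (hxt k)
  exact ⟨⟨r_eq_step, r_eq_gap, r_eq_residuals⟩, r_mem, dw_eq, by simpa using dw_eq.le⟩

end

/-- The relaxed PR splitting method is an NE-HPE instance for the
inclusion `0 ∈ (ℒ_θ̃ + γC)(z)` with `λ_k = 1`, `ε_k = 0` and `σ = (θ/θ̃ − 1)²`. -/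
theorem stmt14 {X : Type*} [NormedAddCommGroup X] [InnerProductSpace ℝ X]
    [FiniteDimensional ℝ X]
    (β : ℝ) (hβ : 0 ≤ β) (A B : X → Set X)
    (hA : MaxStrMono β A) (hB : MaxStrMono β B)
    (γ θ : ℝ) (hγ : 0 < γ) (hθ : 0 < θ)
    (θ0 : ℝ) (hθ0 : θ0 = 1 + γ * β / 2) (θt : ℝ) (hθt : θt = min θ θ0)
    (x u v : ℕ → X) (hpr : RPR A B γ θ x u v)
    (a b : ℕ → X)
    (ha : ∀ k, a k = γ⁻¹ • (x (k - 1) - u k))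
    (hb : ∀ k, b k = γ⁻¹ • ((2 : ℝ) • u k - v k - x (k - 1)))
    (xt : ℕ → X) (hxt : ∀ k, xt k = x (k - 1) + θt • (v k - u k))
    (r : ℕ → X × X × X)
    (hr : ∀ k, r k = gradw3 θ (u (k - 1), v (k - 1), x (k - 1)) - gradw3 θ (u k, v k, x k)) :
    ∀ k, 1 ≤ k →
      (r k = (((0 : X), (0 : X), θ⁻¹ • (x (k - 1) - x k)) : X × X × X)
        ∧ r k = (((0 : X), (0 : X), u k - v k) : X × X × X)
        ∧ r k = γ • (((0 : X), (0 : X), a k + b k) : X × X × X))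
      ∧ r k ∈ LC θt γ A B (u k, v k, xt k)
      ∧ (dw3 θ (u k, v k, x k) (u k, v k, xt k)
            = (θ / θt - 1) ^ 2 * dw3 θ (u (k - 1), v (k - 1), x (k - 1)) (u k, v k, xt k)
        ∧ dw3 θ (u k, v k, x k) (u k, v k, xt k) + 1 * 0
            ≤ (θ / θt - 1) ^ 2 * dw3 θ (u (k - 1), v (k - 1), x (k - 1)) (u k, v k, xt k)) := by
  have hθt_pos : 0 < θt := hθt ▸ lt_min hθ (hθ0 ▸ by positivity)
  exact stmt14_general hγ.ne' hθ.ne' hθt_pos.ne' hpr ha hb hxt hr
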